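/- Let d ≥ 1 and equip ℝ^d with the sup norm ‖x‖ = max_i |x_i|. Let γ' ∈ (0,1) and let F : ℝ^d → ℝ^d satisfy ‖F(x) − F(y)‖ ≤ γ'‖x − y‖ for all x, y, with fixed point θ* (F(θ*) = θ*) satisfying ‖θ*‖ ≤ Z for a constant Z > 0. Let (Ω, 𝒢, ℙ) be a probability space with a filtration (ℱ_t)_{t∈ℕ}, let τ ≥ 1 and t₀ be integers, let H ≥ 2/(1−γ'), t₀ ≥ max(4H, τ), and set α_t = H/(t + t₀). Let (θ_t)_{t≥τ} be an (ℱ_t)-adapted ℝ^d-valued process with ‖θ_t‖ ≤ Z almost surely for all t, and let (M_t)_{t≥τ} be ℝ^d-valued with M_t being ℱ_{t+1}-measurable, 𝔼[M_t | ℱ_t] = 0 almost surely, and ‖M_t‖ ≤ M̄ almost surely. Suppose the updates satisfy θ_{t+1} = (1 − α_t)θ_t + α_t(F(θ_t) + M_t) almost surely for all t ≥ τ. Then for every integer T > τ and every δ ∈ (0,1), with probability at least 1 − (T − τ)δ, ‖θ_T − θ*‖ ≤ (4M̄/(1 − γ'))·√(H·log(2d/δ)/(T + t₀)) + 4Z(τ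 + t₀)/((1 − γ')(T + t₀)). -/

import Mathlib

open MeasureTheory

/-- The noise recursion `N_{n+1} = (1-a_n) N_n + a_n y_n`, `N_0 = 0`. -/
noncomputable def noiseRec (a y : ℕ → ℝ) : ℕ → ℝ
  | 0 => 0
  | n + 1 => (1 - a n) * noiseRec a y n + a n * y n

/-- The variance proxy recursion. -/
noncomputable def varRec (a : ℕ → ℝ) : ℕ → ℝ
  | 0 => 0
  | n + 1 => (1 - a n) ^ 2 * varRec a n + a n ^ 2

lemma noiseRec_neg (a y : ℕ → ℝ) (n : ℕ) :
    noiseRec a (fun k => - y k) n = - noiseRec a y n := by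
  induction n with
  | zero => simp [noiseRec]
  | succ n ih => simp only [noiseRec, ih]; ring

lemma noiseRec_abs_le (a y : ℕ → ℝ) (b : ℝ) (hb : 0 ≤ b) (ha0 : ∀ n, 0 ≤ a n) (ha1 : ∀ n, a n ≤ 1)
    (hy : ∀ n, |y n| ≤ b) (n : ℕ) : |noiseRec a y n| ≤ b := by
  induction n with
  | zero => simpa [noiseRec] using hb
  | succ n ih =>
    have h0 := ha0 n
    have h1 := ha1 n
    have h2 := abs_le.1 ih
    have h3 := abs_le.1 (hy n)
    simp only [noiseRec]
    rw [abs_le]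
    constructor
    · nlinarith [mul_le_mul_of_nonneg_left h2.1 (sub_nonneg.2 h1), mul_le_mul_of_nonneg_left h3.1 h0]
    · nlinarith [mul_le_mul_of_nonneg_left h2.2 (sub_nonneg.2 h1), mul_le_mul_of_nonneg_left h3.2 h0]

section mgfpart
variable {Ω : Type*} {m0 : MeasurableSpace Ω}

lemma exp_bdd_integrable (μ : Measure Ω) [IsProbabilityMeasure μ] (X : Ω → ℝ)
    (hX : StronglyMeasurable X) (b : ℝ) (hb : ∀ᵐ ω ∂μ, |X ω| ≤ b) (l : ℝ) :
    Integrable (fun ω => Real.exp (l * X ω)) μ := by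
  refine Integrable.of_bound (C := Real.exp (|l| * b)) ?_ ?_
  · exact (Real.continuous_exp.comp_stronglyMeasurable (hX.const_mul l)).aestronglyMeasurable
  · filter_upwards [hb] with ω h
    rw [Real.norm_eq_abs, abs_of_pos (Real.exp_pos _)]
    apply Real.exp_le_exp.2
    calc l * X ω ≤ |l * X ω| := le_abs_self _
      _ = |l| * |X ω| := abs_mul _ _
      _ ≤ _ := by gcongr

lemma mgf_step (μ : Measure Ω) [IsProbabilityMeasure μ] (m : MeasurableSpace Ω) (hm : m ≤ m0)
    (X Y : Ω → ℝ) (hX : StronglyMeasurable[m] X) (hY : StronglyMeasurable[m0] Y) (b : ℝ) (hb : 0 < b)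
    (hXb : ∀ᵐ ω ∂μ, |X ω| ≤ b) (hYb : ∀ᵐ ω ∂μ, |Y ω| ≤ b) (hc : μ[Y | m] =ᵐ[μ] 0) (p q : ℝ) :
    ∫ ω, Real.exp (p * X ω + q * Y ω) ∂μ
      ≤ Real.exp (q ^ 2 * b ^ 2 / 2) * ∫ ω, Real.exp (p * X ω) ∂μ := by
  have hW := exp_bdd_integrable μ X (hX.mono hm) b hXb p
  have hYi : Integrable Y μ := Integrable.of_bound (C := b) hY.aestronglyMeasurable
    (by simpa [Real.norm_eq_abs] using hYb)
  have hWm : StronglyMeasurable[m] (fun ω => Real.exp (p * X ω)) :=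
    Real.continuous_exp.comp_stronglyMeasurable (hX.const_mul p)
  have hWY : Integrable ((fun ω => Real.exp (p * X ω)) * Y) μ := by
    have := hW.mul_bdd (c := b) hY.aestronglyMeasurable (by simpa [Real.norm_eq_abs] using hYb)
    exact this
  have hWY' : Integrable (fun ω => Real.exp (p * X ω) * Y ω) μ := hWY
  have hzero : ∫ ω, Real.exp (p * X ω) * Y ω ∂μ = 0 := by
    have h1 := condExp_mul_of_stronglyMeasurable_left hWm hWY hYi
    have h2 : ∫ ω, ((fun ω => Real.exp (p * X ω)) * Y) ω ∂μ = 0 := by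
      rw [← integral_condExp hm]
      rw [integral_congr_ae (g := fun _ => (0 : ℝ)), integral_zero]
      filter_upwards [h1, hc] with ω h3 h4
      rw [h3, Pi.mul_apply, h4]; simp
    exact h2
  have hle : ∫ ω, Real.exp (p * X ω + q * Y ω) ∂μ ≤
      ∫ ω, (Real.cosh (q * b) * Real.exp (p * X ω)
        + (Real.sinh (q * b) / b) * (Real.exp (p * X ω) * Y ω)) ∂μ := by
    apply integral_mono_of_nonneg
    · exact Filter.Eventually.of_forall fun ω => (Real.exp_pos _).le
    · exact (hW.const_mul _).add (hWY'.const_mul _)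
    · filter_upwards [hYb] with ω h
      have ht : |Y ω / b| ≤ 1 := by
        rw [abs_div, abs_of_pos hb]; exact (div_le_one hb).2 h
      have := Real.exp_mul_le_cosh_add_mul_sinh ht (q * b)
      have e : Y ω / b * (q * b) = q * Y ω := by field_simp
      rw [e] at this
      rw [Real.exp_add]
      calc _ ≤ Real.exp (p * X ω) * (Real.cosh (q * b) + Y ω / b * Real.sinh (q * b)) := by gcongr
        _ = _ := by ring
  rw [integral_add (hW.const_mul _) (hWY'.const_mul _), integral_const_mul, integral_const_mul,
    hzero, mul_zero, add_zero] at hle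
  refine hle.trans ?_
  have : Real.cosh (q * b) ≤ Real.exp (q ^ 2 * b ^ 2 / 2) := by
    have := Real.cosh_le_exp_half_sq (q * b)
    rwa [mul_pow] at this
  have h0 : 0 ≤ ∫ ω, Real.exp (p * X ω) ∂μ := integral_nonneg fun ω => (Real.exp_pos _).le
  gcongr

lemma noise_meas (m : ℕ → MeasurableSpace Ω) (hmono : ∀ n, m n ≤ m (n + 1)) (a : ℕ → ℝ)
    (Y : ℕ → Ω → ℝ) (hY : ∀ n, StronglyMeasurable[m (n + 1)] (Y n)) (n : ℕ) :
    StronglyMeasurable[m n] (fun ω => noiseRec a (fun k => Y k ω) n) := by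
  induction n with
  | zero => simp only [noiseRec]; exact stronglyMeasurable_const
  | succ n ih =>
    simp only [noiseRec]
    exact ((ih.mono (hmono n)).const_mul _).add ((hY n).const_mul _)

lemma noise_mgf (μ : Measure Ω) [IsProbabilityMeasure μ] (m : ℕ → MeasurableSpace Ω)
    (hm : ∀ n, m n ≤ m0) (hmono : ∀ n, m n ≤ m (n + 1)) (a : ℕ → ℝ)
    (ha0 : ∀ n, 0 ≤ a n) (ha1 : ∀ n, a n ≤ 1)
    (Y : ℕ → Ω → ℝ) (hY : ∀ n, StronglyMeasurable[m (n + 1)] (Y n)) (b : ℝ) (hb : 0 < b)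
    (hYb : ∀ n, ∀ᵐ ω ∂μ, |Y n ω| ≤ b) (hc : ∀ n, μ[Y n | m n] =ᵐ[μ] 0) (n : ℕ) (l : ℝ) :
    ∫ ω, Real.exp (l * noiseRec a (fun k => Y k ω) n) ∂μ
      ≤ Real.exp (l ^ 2 * b ^ 2 * varRec a n / 2) := by
  have hall := ae_all_iff.2 hYb
  induction n generalizing l with
  | zero => simp [noiseRec, varRec]
  | succ n ih =>
    have hs := mgf_step μ (m n) (hm n) (fun ω => noiseRec a (fun k => Y k ω) n) (Y n)
      (noise_meas m hmono a Y hY n) ((hY n).mono (hm _)) b hb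
      (by filter_upwards [hall] with ω h; exact noiseRec_abs_le a _ b hb.le ha0 ha1 h n)
      (hYb n) (hc n) (l * (1 - a n)) (l * a n)
    have e : ∀ ω, l * noiseRec a (fun k => Y k ω) (n + 1)
        = l * (1 - a n) * noiseRec a (fun k => Y k ω) n + l * a n * Y n ω := by
      intro ω; simp only [noiseRec]; ring
    simp only [e]
    refine hs.trans ?_
    refine (mul_le_mul_of_nonneg_left (ih _) (Real.exp_pos _).le).trans (le_of_eq ?_)
    rw [← Real.exp_add]
    congr 1
    simp only [varRec]
    ring

lemma noise_tail_one (μ : Measure Ω) [IsProbabilityMeasure μ] (m : ℕ → MeasurableSpace Ω)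
    (hm : ∀ n, m n ≤ m0) (hmono : ∀ n, m n ≤ m (n + 1)) (a : ℕ → ℝ)
    (ha0 : ∀ n, 0 ≤ a n) (ha1 : ∀ n, a n ≤ 1)
    (Y : ℕ → Ω → ℝ) (hY : ∀ n, StronglyMeasurable[m (n + 1)] (Y n)) (b : ℝ) (hb : 0 ≤ b)
    (hYb : ∀ n, ∀ᵐ ω ∂μ, |Y n ω| ≤ b) (hc : ∀ n, μ[Y n | m n] =ᵐ[μ] 0) (n : ℕ)
    (V L : ℝ) (hV : varRec a n ≤ V) (hV0 : 0 < V) (hL : 0 < L) :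
    μ.real {ω | b * Real.sqrt (2 * V * L) < noiseRec a (fun k => Y k ω) n} ≤ Real.exp (-L) := by
  have hall := ae_all_iff.2 hYb
  have hbd : ∀ᵐ ω ∂μ, |noiseRec a (fun k => Y k ω) n| ≤ b := by
    filter_upwards [hall] with ω h; exact noiseRec_abs_le a _ b hb ha0 ha1 h n
  rcases hb.eq_or_lt with h0 | hb
  · subst h0
    have : μ {ω | 0 * Real.sqrt (2 * V * L) < noiseRec a (fun k => Y k ω) n} = 0 := by
      rw [← compl_compl {ω | 0 * Real.sqrt (2 * V * L) < noiseRec a (fun k => Y k ω) n}]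
      rw [← mem_ae_iff]
      filter_upwards [hbd] with ω h
      simp only [Set.mem_compl_iff, Set.mem_ofPred_eq, zero_mul, not_lt]
      exact (le_abs_self _).trans h
    rw [measureReal_def, this]
    simpa using (Real.exp_pos _).le
  · set ε := b * Real.sqrt (2 * V * L) with hε
    have hVL : 0 < 2 * V * L := by positivity
    have hsq : Real.sqrt (2 * V * L) ^ 2 = 2 * V * L := Real.sq_sqrt hVL.le
    have hεp : 0 < ε := by positivity
    set l := ε / (b ^ 2 * V) with hl
    have hlp : 0 < l := by positivity
    have hint := exp_bdd_integrable μ (fun ω => noiseRec a (fun k => Y k ω) n)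
      ((noise_meas m hmono a Y hY n).mono (hm n)) b hbd l
    have h1 := ProbabilityTheory.measure_ge_le_exp_mul_mgf ε hlp.le hint
    have h2 := noise_mgf μ m hm hmono a ha0 ha1 Y hY b hb hYb hc n l
    calc _ ≤ μ.real {ω | ε ≤ noiseRec a (fun k => Y k ω) n} :=
          by
            refine measureReal_mono ?_ (measure_ne_top _ _)
            intro ω h
            simp only [Set.mem_ofPred_eq] at h ⊢
            exact h.le
      _ ≤ _ := h1
      _ ≤ Real.exp (-l * ε) * Real.exp (l ^ 2 * b ^ 2 * varRec a n / 2) :=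
          mul_le_mul_of_nonneg_left h2 (Real.exp_pos _).le
      _ ≤ Real.exp (-l * ε) * Real.exp (l ^ 2 * b ^ 2 * V / 2) := by gcongr
      _ = Real.exp (-L) := by
          rw [← Real.exp_add]
          congr 1
          have hε2 : ε ^ 2 = b ^ 2 * (2 * V * L) := by rw [hε, mul_pow, hsq]
          have e1 : l * ε = 2 * L := by
            rw [hl, div_mul_eq_mul_div, ← sq, hε2]; field_simp
          have e2 : l ^ 2 * b ^ 2 * V = 2 * L := by
            rw [hl, div_pow, hε2]; field_simp
          linarith

lemma noise_tail (μ : Measure Ω) [IsProbabilityMeasure μ] (m : ℕ → MeasurableSpace Ω)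
    (hm : ∀ n, m n ≤ m0) (hmono : ∀ n, m n ≤ m (n + 1)) (a : ℕ → ℝ)
    (ha0 : ∀ n, 0 ≤ a n) (ha1 : ∀ n, a n ≤ 1)
    (Y : ℕ → Ω → ℝ) (hY : ∀ n, StronglyMeasurable[m (n + 1)] (Y n)) (b : ℝ) (hb : 0 ≤ b)
    (hYb : ∀ n, ∀ᵐ ω ∂μ, |Y n ω| ≤ b) (hc : ∀ n, μ[Y n | m n] =ᵐ[μ] 0) (n : ℕ)
    (V L : ℝ) (hV : varRec a n ≤ V) (hV0 : 0 < V) (hL : 0 < L) :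
    μ.real {ω | b * Real.sqrt (2 * V * L) < |noiseRec a (fun k => Y k ω) n|}
      ≤ 2 * Real.exp (-L) := by
  have h1 := noise_tail_one μ m hm hmono a ha0 ha1 Y hY b hb hYb hc n V L hV hV0 hL
  have h2 := noise_tail_one μ m hm hmono a ha0 ha1 (fun n ω => - Y n ω) (fun n => (hY n).neg) b hb
    (by simpa using hYb) (by
      intro n
      have := condExp_neg (μ := μ) (Y n) (m n)
      filter_upwards [this, hc n] with ω h3 h4
      have h5 : μ[fun ω => - Y n ω | m n] ω = (-μ[Y n | m n]) ω := h3
      rw [h5, Pi.neg_apply, h4]; simp) n V L hV hV0 hL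
  simp only [noiseRec_neg] at h2
  have hsub : {ω | b * Real.sqrt (2 * V * L) < |noiseRec a (fun k => Y k ω) n|} ⊆
      {ω | b * Real.sqrt (2 * V * L) < noiseRec a (fun k => Y k ω) n} ∪
      {ω | b * Real.sqrt (2 * V * L) < - noiseRec a (fun k => Y k ω) n} := by
    intro ω h
    simp only [Set.mem_union, Set.mem_ofPred_eq] at h ⊢
    exact lt_abs.1 h
  calc _ ≤ _ := measureReal_mono hsub
    _ ≤ _ := measureReal_union_le _ _
    _ ≤ _ := by linarith

end mgfpart

lemma varRec_le (a : ℕ → ℝ) (H s : ℝ) (hH : 2 ≤ H) (hs : 4 * H ≤ s)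
    (ha : ∀ n : ℕ, a n = H / (s + n)) (n : ℕ) : varRec a n ≤ 2 * H / (s + n) := by
  induction n with
  | zero => simp only [varRec]; apply div_nonneg <;> push_cast <;> linarith
  | succ n ih =>
    simp only [varRec, ha]
    have hn : (0 : ℝ) ≤ n := Nat.cast_nonneg n
    push_cast
    rw [← add_assoc]
    set u : ℝ := s + n with hu
    have hu4 : 4 * H ≤ u := by linarith
    have hup : 0 < u := by linarith
    calc (1 - H / u) ^ 2 * varRec a n + (H / u) ^ 2 ≤ (1 - H / u) ^ 2 * (2 * H / u) + (H / u) ^ 2 := by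
          gcongr
      _ ≤ 2 * H / (u + 1) := by
          have e : (1 - H / u) ^ 2 * (2 * H / u) + (H / u) ^ 2
              = H * (2 * (u - H) ^ 2 + H * u) / u ^ 3 := by field_simp
          rw [e, div_le_div_iff₀ (by positivity) (by positivity)]
          have key : (2 * (u - H) ^ 2 + H * u) * (u + 1) ≤ 2 * u ^ 3 := by
            have k1 : 2 * (u - H) ^ 2 + H * u ≤ 2 * u ^ 2 - 2 * u := by nlinarith
            have k2 := mul_le_mul_of_nonneg_right k1 (by linarith : 0 ≤ u + 1)
            nlinarith
          nlinarith [mul_le_mul_of_nonneg_left key (by linarith : 0 ≤ H)]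

/-- Deterministic comparison. -/
lemma det_rec (γ H s c B : ℝ) (hγ0 : 0 < γ) (hγ1 : γ < 1) (hH : 2 / (1 - γ) ≤ H) (hs : 4 * H ≤ s)
    (hc : 0 ≤ c) (hB : 0 ≤ B) (y : ℕ → ℝ) (K : ℕ) (h0 : y 0 ≤ B / s)
    (hy : ∀ n : ℕ, n < K → y (n + 1) ≤ (1 - H / (s + n) * (1 - γ)) * y n
      + H / (s + n) * γ * (c / Real.sqrt (s + n))) (n : ℕ) (hn : n ≤ K) :
    y n ≤ 2 * γ * c / (1 - γ) / Real.sqrt (s + n) + B / (s + n) := by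
  have hg : 0 < 1 - γ := by linarith
  have hH2 : 2 ≤ H * (1 - γ) := by rwa [div_le_iff₀ hg] at hH
  have hHp : 0 < H := by
    have : 0 < 2 / (1 - γ) := by positivity
    linarith
  induction n with
  | zero =>
    have : 0 ≤ 2 * γ * c / (1 - γ) / Real.sqrt (s + (0 : ℕ)) := by positivity
    simp only [Nat.cast_zero, add_zero] at this ⊢
    linarith
  | succ n ih =>
    have hyn := hy n (by omega)
    have ihn := ih (by omega)
    have hn0 : (0 : ℝ) ≤ n := Nat.cast_nonneg n
    push_cast
    rw [← add_assoc]
    set u : ℝ := s + n with hu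
    have hup : 0 < u := by linarith
    have hu4 : 4 * H ≤ u := by linarith
    set A := 2 * γ * c / (1 - γ) with hA
    have hA0 : 0 ≤ A := by positivity
    have hAc : A * (1 - γ) = 2 * γ * c := by rw [hA]; field_simp
    have hk : 0 ≤ 1 - H / u * (1 - γ) := by
      have : H / u ≤ 1 := by rw [div_le_one hup]; linarith
      nlinarith [div_nonneg hHp.le hup.le]
    have hsu : 0 < Real.sqrt u := Real.sqrt_pos.2 hup
    have hsu1 : 0 < Real.sqrt (u + 1) := Real.sqrt_pos.2 (by linarith)
    -- B part
    have hBpart : (1 - H / u * (1 - γ)) * (B / u) ≤ B / (u + 1) := by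
      have : (1 - H / u * (1 - γ)) / u ≤ 1 / (u + 1) := by
        have e : (1 - H / u * (1 - γ)) / u = (u - H * (1 - γ)) / u ^ 2 := by field_simp
        rw [e, div_le_div_iff₀ (by positivity) (by positivity)]
        nlinarith
      calc _ = B * ((1 - H / u * (1 - γ)) / u) := by ring
        _ ≤ B * (1 / (u + 1)) := by gcongr
        _ = _ := by ring
    -- A part
    have hroot : (1 - 1 / u) / Real.sqrt u ≤ 1 / Real.sqrt (u + 1) := by
      have hle : (1 - 1 / u) * Real.sqrt (u + 1) ≤ Real.sqrt u := by
        apply Real.le_sqrt_of_sq_le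
        rw [mul_pow, Real.sq_sqrt (by linarith)]
        have e : (1 - 1 / u) ^ 2 * (u + 1) = (u - 1) ^ 2 * (u + 1) / u ^ 2 := by field_simp
        have hg1 : 1 - γ ≤ 1 := by linarith
        have hH2' : 2 ≤ H := by nlinarith
        rw [e, div_le_iff₀ (by positivity)]
        nlinarith
      rw [div_le_div_iff₀ hsu hsu1]
      linarith
    have hApart : (1 - H / u * (1 - γ)) * (A / Real.sqrt u) + H / u * γ * (c / Real.sqrt u)
        ≤ A / Real.sqrt (u + 1) := by
      have e : (1 - H / u * (1 - γ)) * (A / Real.sqrt u) + H / u * γ * (c / Real.sqrt u)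
          = (A - H / u * (A * (1 - γ)) / 2) / Real.sqrt u := by
        rw [hAc]
        have : H / u * (A * (1 - γ)) = H / u * (2 * γ * c) := by rw [hAc]
        field_simp
        field_simp at this
        nlinarith
      rw [e]
      have h2 : A - H / u * (A * (1 - γ)) / 2 ≤ A * (1 - 1 / u) := by
        have e2 : H / u * (A * (1 - γ)) / 2 = A * (H * (1 - γ) / 2) * (1 / u) := by field_simp
        rw [e2]
        have : A * 1 * (1 / u) ≤ A * (H * (1 - γ) / 2) * (1 / u) := by
          gcongr; linarith
        linarith
      calc _ ≤ (A * (1 - 1 / u)) / Real.sqrt u := by gcongr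
        _ = A * ((1 - 1 / u) / Real.sqrt u) := by ring
        _ ≤ A * (1 / Real.sqrt (u + 1)) := by gcongr
        _ = _ := by ring
    have := mul_le_mul_of_nonneg_left ihn hk
    rw [mul_add] at this
    linarith

lemma pathwise {d : ℕ} (γ H s c Z : ℝ) (hγ0 : 0 < γ) (hγ1 : γ < 1) (hH : 2 / (1 - γ) ≤ H)
    (hs : 4 * H ≤ s) (hc : 0 ≤ c) (hZ : 0 < Z)
    (F : (Fin d → ℝ) → (Fin d → ℝ)) (hF : ∀ x y : Fin d → ℝ, ‖F x - F y‖ ≤ γ * ‖x - y‖)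
    (θstar : Fin d → ℝ) (hfix : F θstar = θstar) (hθstar : ‖θstar‖ ≤ Z)
    (θ M : ℕ → Fin d → ℝ) (h0 : ‖θ 0‖ ≤ Z)
    (hrec : ∀ n : ℕ, θ (n + 1) = (1 - H / (s + n)) • θ n + (H / (s + n)) • (F (θ n) + M n))
    (K : ℕ) (hN : ∀ n, 1 ≤ n → n ≤ K → ∀ i,
      |noiseRec (fun n => H / (s + n)) (fun k => M k i) n| ≤ c / Real.sqrt (s + n)) (hK : 1 ≤ K) :
    ‖θ K - θstar‖ ≤ 2 * c / (1 - γ) / Real.sqrt (s + K) + 4 * Z * s / ((1 - γ) * (s + K)) := by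
  have hg : 0 < 1 - γ := by linarith
  have hHp : 0 < H := by
    have : 0 < 2 / (1 - γ) := by positivity
    linarith
  have hsp : 0 < s := by linarith
  set N : ℕ → Fin d → ℝ := fun n i => noiseRec (fun n => H / (s + n)) (fun k => M k i) n with hNdef
  have hNb : ∀ n, n ≤ K → ‖N n‖ ≤ c / Real.sqrt (s + n) := by
    intro n hn
    rw [pi_norm_le_iff_of_nonneg (by positivity)]
    intro i
    rcases Nat.eq_zero_or_pos n with h | h
    · subst h
      simp only [hNdef, noiseRec, norm_zero]
      positivity
    · exact hN n h hn i
  have hy0 : ‖θ 0 - θstar - N 0‖ ≤ 2 * Z * s / s := by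
    have : N 0 = 0 := by ext i; simp [hNdef, noiseRec]
    rw [this, sub_zero, mul_div_cancel_right₀ _ hsp.ne']
    calc _ ≤ ‖θ 0‖ + ‖θstar‖ := norm_sub_le _ _
      _ ≤ _ := by linarith
  have hdet := det_rec γ H s c (2 * Z * s) hγ0 hγ1 hH hs hc (by positivity)
    (fun n => ‖θ n - θstar - N n‖) K hy0 (by
      intro n hn
      have hn0 : (0 : ℝ) ≤ n := Nat.cast_nonneg n
      have ha0 : 0 ≤ H / (s + n) := by positivity
      have ha1 : H / (s + n) ≤ 1 := by rw [div_le_one (by positivity)]; linarith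
      have hb := hNb n hn.le
      have e : θ (n + 1) - θstar - N (n + 1) = (1 - H / (s + n)) • (θ n - θstar - N n)
          + (H / (s + n)) • (F (θ n) - F θstar) := by
        rw [hrec n, hfix]
        ext i
        simp only [hNdef, noiseRec, Pi.sub_apply, Pi.add_apply, Pi.smul_apply, smul_eq_mul]
        ring
      have h1 : ‖θ n - θstar‖ ≤ ‖θ n - θstar - N n‖ + c / Real.sqrt (s + n) := by
        calc ‖θ n - θstar‖ = ‖(θ n - θstar - N n) + N n‖ := by rw [sub_add_cancel]
          _ ≤ _ := norm_add_le _ _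
          _ ≤ _ := by gcongr
      rw [e]
      calc _ ≤ (1 - H / (s + n)) * ‖θ n - θstar - N n‖ + H / (s + n) * ‖F (θ n) - F θstar‖ := by
            refine (norm_add_le _ _).trans (le_of_eq ?_)
            rw [norm_smul, norm_smul, Real.norm_eq_abs, Real.norm_eq_abs, abs_of_nonneg ha0,
              abs_of_nonneg (by linarith : 0 ≤ 1 - H / (s + n))]
        _ ≤ (1 - H / (s + n)) * ‖θ n - θstar - N n‖ + H / (s + n) *
            (γ * (‖θ n - θstar - N n‖ + c / Real.sqrt (s + n))) := by
            gcongr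
            refine (hF _ _).trans ?_
            gcongr
        _ = _ := by ring) K le_rfl
  have hb := hNb K le_rfl
  have h1 : ‖θ K - θstar‖ ≤ ‖θ K - θstar - N K‖ + c / Real.sqrt (s + K) := by
    calc ‖θ K - θstar‖ = ‖(θ K - θstar - N K) + N K‖ := by rw [sub_add_cancel]
      _ ≤ _ := norm_add_le _ _
      _ ≤ _ := by gcongr
  have hsq : 0 < Real.sqrt (s + K) := Real.sqrt_pos.2 (by positivity)
  have h2 : 2 * γ * c / (1 - γ) / Real.sqrt (s + K) + c / Real.sqrt (s + K)
      ≤ 2 * c / (1 - γ) / Real.sqrt (s + K) := by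
    rw [← add_div]
    gcongr
    rw [le_div_iff₀ hg, add_mul, div_mul_cancel₀ _ hg.ne']
    nlinarith
  have h3 : 2 * Z * s / (s + K) ≤ 4 * Z * s / ((1 - γ) * (s + K)) := by
    rw [div_le_div_iff₀ (by positivity) (by positivity)]
    have : 0 ≤ 2 * Z * s * (s + K) := by positivity
    nlinarith
  linarith

/-- Finite-time convergence theorem for the stochastic-approximation recursion
`θ_{t+1} = (1-α_t) θ_t + α_t (F(θ_t) + M_t)` with step sizes `α_t = H/(t+t₀)`,
underlying SOR minimax Q-learning with linear function approximation.
`ℝ^d` carries the sup norm (`Fin d → ℝ`); `F` is a `γ'`-contraction with fixed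
point `θ*` of norm at most `Z`; `(M_t)` is a bounded martingale-difference noise
sequence (`Mbar` plays the role of `M̄`). For every `T > τ` and `δ ∈ (0,1)`, with
probability at least `1 - (T-τ)δ`,
`‖θ_T - θ*‖ ≤ (4M̄/(1-γ')) √(H log(2d/δ)/(T+t₀)) + 4Z(τ+t₀)/((1-γ')(T+t₀))`. -/
theorem stmt_0 (d : ℕ) (hd : 1 ≤ d) (γ' : ℝ) (hγ' : γ' ∈ Set.Ioo (0 : ℝ) 1)
    (F : (Fin d → ℝ) → (Fin d → ℝ))
    (hF : ∀ x y : Fin d → ℝ, ‖F x - F y‖ ≤ γ' * ‖x - y‖)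
    (θstar : Fin d → ℝ) (hfix : F θstar = θstar)
    (Z : ℝ) (hZ : 0 < Z) (hθstar : ‖θstar‖ ≤ Z)
    {Ω : Type*} {m0 : MeasurableSpace Ω} (μ : Measure Ω) [IsProbabilityMeasure μ]
    (ℱ : Filtration ℕ m0)
    (τ t₀ : ℕ) (hτ : 1 ≤ τ)
    (H : ℝ) (hH : 2 / (1 - γ') ≤ H)
    (ht₀ : max (4 * H) (τ : ℝ) ≤ (t₀ : ℝ))
    (θ M : ℕ → Ω → Fin d → ℝ) (Mbar : ℝ)
    (hadapted : Adapted ℱ θ)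
    (hθbdd : ∀ t, ∀ᵐ ω ∂μ, ‖θ t ω‖ ≤ Z)
    (hMmeas : ∀ t, StronglyMeasurable[ℱ (t + 1)] (M t))
    (hMcond : ∀ t, μ[M t | ℱ t] =ᵐ[μ] 0)
    (hMbdd : ∀ t, ∀ᵐ ω ∂μ, ‖M t ω‖ ≤ Mbar)
    (hrec : ∀ t, τ ≤ t → ∀ᵐ ω ∂μ,
      θ (t + 1) ω =
        (1 - H / ((t : ℝ) + t₀)) • θ t ω
        + (H / ((t : ℝ) + t₀)) • (F (θ t ω) + M t ω)) :
    ∀ T : ℕ, τ < T → ∀ δ : ℝ, δ ∈ Set.Ioo (0 : ℝ) 1 →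
      ENNReal.ofReal (1 - ((T : ℝ) - (τ : ℝ)) * δ) ≤
        μ {ω | ‖θ T ω - θstar‖ ≤
          (4 * Mbar / (1 - γ')) * Real.sqrt (H * Real.log (2 * d / δ) / ((T : ℝ) + t₀))
          + 4 * Z * ((τ : ℝ) + t₀) / ((1 - γ') * ((T : ℝ) + t₀))} := by
  intro T hT δ hδ
  obtain ⟨hγ0, hγ1⟩ := hγ'
  obtain ⟨hδ0, hδ1⟩ := hδ
  have hg : 0 < 1 - γ' := by linarith
  have hH2 : 2 ≤ H := by
    refine le_trans ?_ hH
    rw [le_div_iff₀ hg]; linarith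
  have hdr : (1 : ℝ) ≤ d := by exact_mod_cast hd
  have h4H : 4 * H ≤ (t₀ : ℝ) := (le_max_left _ _).trans ht₀
  obtain ⟨K, rfl⟩ : ∃ K, T = τ + K := ⟨T - τ, by omega⟩
  have hK : 1 ≤ K := by omega
  have hτ0 : (0 : ℝ) ≤ τ := Nat.cast_nonneg τ
  set s : ℝ := (τ : ℝ) + t₀ with hs
  have hs4 : 4 * H ≤ s := by linarith
  have hsp : 0 < s := by linarith
  have hMb : 0 ≤ Mbar := by
    obtain ⟨ω, hω⟩ := (hMbdd 0).exists
    exact (norm_nonneg _).trans hω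
  set L := Real.log (2 * d / δ) with hL
  have hq : 1 < 2 * (d : ℝ) / δ := by rw [lt_div_iff₀ hδ0]; linarith
  have hLp : 0 < L := Real.log_pos hq
  have hexpL : 2 * Real.exp (-L) = δ / d := by
    rw [Real.exp_neg, hL, Real.exp_log (by linarith)]
    field_simp
  set a : ℕ → ℝ := fun n => H / (s + n) with ha
  have ha0 : ∀ n, 0 ≤ a n := fun n => by simp only [ha]; positivity
  have ha1 : ∀ n, a n ≤ 1 := fun n => by
    have : (0 : ℝ) ≤ n := Nat.cast_nonneg n
    simp only [ha]; rw [div_le_one (by positivity)]; linarith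
  set c := 2 * Mbar * Real.sqrt (H * L) with hc
  have hc0 : 0 ≤ c := by positivity
  -- tail bound for each time and coordinate
  have htail : ∀ (n : ℕ) (i : Fin d),
      μ {ω | c / Real.sqrt (s + n) < |noiseRec a (fun k => M (τ + k) ω i) n|}
        ≤ ENNReal.ofReal (δ / d) := by
    intro n i
    have hMi : ∀ t, Integrable (M t) μ := fun t =>
      Integrable.of_bound (C := Mbar) ((hMmeas t).mono (ℱ.le _)).aestronglyMeasurable (hMbdd t)
    have h := noise_tail μ (fun n => ℱ (τ + n)) (fun n => ℱ.le _)
      (fun n => ℱ.mono (by omega)) a ha0 ha1 (fun n ω => M (τ + n) ω i)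
      (fun n => (continuous_apply i).comp_stronglyMeasurable (hMmeas (τ + n))) Mbar hMb
      (fun n => by
        filter_upwards [hMbdd (τ + n)] with ω h
        exact (norm_le_pi_norm (M (τ + n) ω) i).trans h)
      (fun n => by
        have := (ContinuousLinearMap.proj (R := ℝ) (φ := fun _ : Fin d => ℝ) i).comp_condExp_comm
          (m := ℱ (τ + n)) (hMi (τ + n))
        have h2 : μ[fun ω => M (τ + n) ω i | ℱ (τ + n)] =ᵐ[μ]
            fun ω => (μ[M (τ + n) | ℱ (τ + n)]) ω i := this.symm
        filter_upwards [h2, hMcond (τ + n)] with ω h3 h4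
        rw [h3, h4]; rfl)
      n (2 * H / (s + n)) L (varRec_le a H s hH2 hs4 (fun n => rfl) n) (by positivity) hLp
    rw [hexpL] at h
    have e : Mbar * Real.sqrt (2 * (2 * H / (s + n)) * L) = c / Real.sqrt (s + n) := by
      have : 2 * (2 * H / (s + n)) * L = 2 ^ 2 * (H * L) / (s + n) := by ring
      rw [this, Real.sqrt_div (by positivity), Real.sqrt_mul (by positivity),
        Real.sqrt_sq (by norm_num), hc]
      ring
    rw [e] at h
    rw [← ENNReal.ofReal_toReal (measure_ne_top μ _)]
    exact ENNReal.ofReal_le_ofReal h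
  set Bad : Set Ω := ⋃ n ∈ Finset.Icc 1 K, ⋃ i ∈ (Finset.univ : Finset (Fin d)),
    {ω | c / Real.sqrt (s + n) < |noiseRec a (fun k => M (τ + k) ω i) n|} with hBad
  have hBadle : μ Bad ≤ ENNReal.ofReal (K * δ) := by
    calc μ Bad ≤ ∑ n ∈ Finset.Icc 1 K, μ (⋃ i ∈ (Finset.univ : Finset (Fin d)),
          {ω | c / Real.sqrt (s + n) < |noiseRec a (fun k => M (τ + k) ω i) n|}) :=
          measure_biUnion_finset_le _ _
      _ ≤ ∑ n ∈ Finset.Icc 1 K, ∑ i ∈ (Finset.univ : Finset (Fin d)), ENNReal.ofReal (δ / d) := by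
          apply Finset.sum_le_sum
          intro n _
          refine (measure_biUnion_finset_le _ _).trans ?_
          exact Finset.sum_le_sum fun i _ => htail n i
      _ = ENNReal.ofReal (K * δ) := by
          simp only [Finset.sum_const, Finset.card_univ, Fintype.card_fin, Nat.card_Icc,
            nsmul_eq_mul, Nat.add_sub_cancel]
          rw [← ENNReal.ofReal_natCast K, ← ENNReal.ofReal_natCast d,
            ← ENNReal.ofReal_mul (by positivity), ← ENNReal.ofReal_mul (by positivity)]
          congr 1
          field_simp
  have hcast : ((τ + K : ℕ) : ℝ) + t₀ = s + K := by push_cast; rw [hs]; ring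
  have hKδ : (((τ + K : ℕ) : ℝ) - τ) * δ = K * δ := by push_cast; ring
  rw [hcast, hKδ]
  set G : Set Ω := {ω | ‖θ (τ + K) ω - θstar‖ ≤
          (4 * Mbar / (1 - γ')) * Real.sqrt (H * L / (s + K))
          + 4 * Z * s / ((1 - γ') * (s + K))} with hG
  have hrec' : ∀ᵐ ω ∂μ, ∀ n : ℕ, θ (τ + n + 1) ω =
        (1 - H / (s + n)) • θ (τ + n) ω + (H / (s + n)) • (F (θ (τ + n) ω) + M (τ + n) ω) := by
    rw [ae_all_iff]
    intro n
    filter_upwards [hrec (τ + n) (by omega)] with ω h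
    have : ((τ + n : ℕ) : ℝ) + t₀ = s + n := by push_cast; rw [hs]; ring
    rw [this] at h
    exact h
  have hsub : Gᶜ ≤ᵐ[μ] Bad := by
    filter_upwards [hrec', hθbdd τ] with ω h1 h2 h3
    by_contra hnb
    apply h3
    have hnb' : ω ∉ Bad := hnb
    simp only [hBad, Set.mem_iUnion, Set.mem_ofPred_eq, not_exists, not_lt, Finset.mem_Icc,
      Finset.mem_univ] at hnb'
    have hp := pathwise γ' H s c Z hγ0 hγ1 hH hs4 hc0 hZ F hF θstar hfix hθstar
      (fun n => θ (τ + n) ω) (fun n => M (τ + n) ω) h2 h1 K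
      (fun n hn1 hnK i => hnb' n ⟨hn1, hnK⟩ i trivial) hK
    show ω ∈ G
    simp only [hG, Set.mem_ofPred_eq]
    refine hp.trans (le_of_eq ?_)
    rw [Real.sqrt_div (by positivity), hc]
    ring
  have h1 : (1 : ENNReal) ≤ μ G + ENNReal.ofReal (K * δ) := by
    calc (1 : ENNReal) = μ (G ∪ Gᶜ) := by rw [Set.union_compl_self, measure_univ]
      _ ≤ μ G + μ Gᶜ := measure_union_le _ _
      _ ≤ μ G + ENNReal.ofReal (K * δ) := by
          gcongr
          exact (measure_mono_ae hsub).trans hBadle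
  rw [ENNReal.ofReal_sub _ (by positivity), ENNReal.ofReal_one]
  exact tsub_le_iff_right.2 h1
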